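/- arXiv:2602.23290 — 2 statements merged into one kernel-verified Lean document; each statement's English description precedes it below -/
import Mathlib

section
/- (Whitney's Theorem.) Let G and H be connected finite simple graphs. If the line graph L(G) is isomorphic to the line graph L(H), then G is isomorphic to H, unless one of G, H is isomorphic to the triangle K₃ (the complete graph on 3 vertices) and the other is isomorphic to the star K₁,₃ (the complete bipartite graph with parts of sizes 1 and 3). -/
open SimpleGraph

/-!
Let `φ : L(G) ≃ L(H)`. Suppose first that `φ` and `φ⁻¹` map all edges at a vertex to edges with a
common vertex. Then each vertex of degree at least two has a partner with the same edges, and a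
vertex of degree one is the other end of an edge whose first end has a partner. A vertex of a
connected graph with at least two edges is determined by its edges, so the partners define an
isomorphism `G ≃ H`.

Otherwise, after possibly exchanging `G` and `H`, there is a claw in `G`, with centre `v` and leaves
`a₀, a₁, a₂`, such that `φ` maps each edge `vaᵢ` to the side opposite `xᵢ` of a triangle `x₀x₁x₂`.
Comparing which edges of the claw a further edge `e` meets, and which sides of the triangle `φ e`
meets, one finds that `e` avoids `v` and, if `e` touches a leaf, that `φ e` contains exactly one
corner `xⱼ` and `e` joins the two leaves other than `aⱼ`. By connectedness, `v, a₀, a₁, a₂` are all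
the vertices of `G`. If there is no further edge, `G` is the star and `H` the triangle. If there is
one, the images of all further edges share an apex `w` outside the triangle; when `a₁a₂` is an edge,
`v, a₀, a₁, a₂ ↦ x₀, w, x₂, x₁` is an isomorphism, and the other cases differ by a permutation of
the indices.
-/

namespace Whitney

variable {V W α : Type*} {G : SimpleGraph V} {H : SimpleGraph W}

lemma eq_of_mem_of_ne {e f : G.edgeSet} {u v : V} (hef : e ≠ f) (hue : u ∈ e.1) (huf : u ∈ f.1)
    (hve : v ∈ e.1) (hvf : v ∈ f.1) : u = v := by
  by_contra huv
  exact hef (Subtype.ext (Sym2.eq_of_ne_mem huv hue hve huf hvf))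

lemma exists_eq_mk_of_mem {e : G.edgeSet} {u : V} (hu : u ∈ e.1) :
    ∃ v, u ≠ v ∧ e.1 = s(u, v) := by
  obtain ⟨v, he⟩ := Sym2.mem_iff_exists.1 hu
  exact ⟨v, G.ne_of_adj ((mem_edgeSet G).1 (he ▸ e.2)), he⟩

lemma exists_edge_mem [Nontrivial V] (hG : G.Preconnected) (v : V) :
    ∃ e : G.edgeSet, v ∈ e.1 := by
  obtain ⟨u, huv⟩ := hG.exists_adj_of_nontrivial v
  exact ⟨⟨s(v, u), huv⟩, Sym2.mem_mk_left v u⟩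

lemma forall_of_adj_closed (hG : G.Preconnected) {P : V → Prop} {u : V} (hu : P u)
    (hP : ∀ p q, G.Adj p q → P p → P q) (v : V) : P v := by
  obtain ⟨walk⟩ := hG u v
  induction walk with
  | nil => exact hu
  | cons hadj _ ih => exact ih (hP _ _ hadj hu)

lemma exists_lineGraph_adj [Nontrivial G.edgeSet] (hG : G.Preconnected) (e : G.edgeSet) :
    ∃ f, G.lineGraph.Adj e f := by
  by_contra! hisolated
  have eq_of_meet (f : G.edgeSet) (v : V) (hve : v ∈ e.1) (hvf : v ∈ f.1) : f = e := by
    by_contra hfe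
    exact hisolated f (lineGraph_adj_iff_exists.2 ⟨Ne.symm hfe, v, hve, hvf⟩)
  have mem_e : ∀ v, v ∈ e.1 :=
    forall_of_adj_closed hG (Sym2.out_fst_mem e.1) fun p q hpq hp ↦ by
      rw [← eq_of_meet ⟨s(p, q), hpq⟩ p hp (Sym2.mem_mk_left p q)]
      exact Sym2.mem_mk_right p q
  obtain ⟨f, hfe⟩ := exists_ne e
  exact hfe (eq_of_meet f _ (mem_e _) (Sym2.out_fst_mem f.1))

lemma eq_of_forall_edge_mem_iff [Nontrivial G.edgeSet] (hG : G.Preconnected) {u v : V}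
    (h : ∀ e : G.edgeSet, u ∈ e.1 ↔ v ∈ e.1) : u = v := by
  by_contra huv
  have : Nontrivial V := ⟨u, v, huv⟩
  obtain ⟨e, hue⟩ := exists_edge_mem hG u
  have he : e.1 = s(u, v) := (Sym2.mem_and_mem_iff huv).1 ⟨hue, (h e).1 hue⟩
  obtain ⟨f, hef⟩ := exists_lineGraph_adj hG e
  obtain ⟨hne, x, hxe, hxf⟩ := lineGraph_adj_iff_exists.1 hef
  have huf : u ∈ f.1 := by
    rw [he, Sym2.mem_iff] at hxe
    rcases hxe with rfl | rfl
    · exact hxf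
    · exact (h f).2 hxf
  exact huv (eq_of_mem_of_ne hne hue huf ((h e).1 hue) ((h f).1 huf))

lemma nonempty_iso_of_bijective [LinearOrder α] {f : α → V} {g : α → W}
    (hf : Function.Bijective f) (hg : Function.Bijective g)
    (h : ∀ i j, i < j → (G.Adj (f i) (f j) ↔ H.Adj (g i) (g j))) : Nonempty (G ≃g H) := by
  have hcomap : G.comap f = H.comap g := by
    ext i j
    rcases lt_trichotomy i j with hij | rfl | hij
    · exact h i j hij
    · simp only [SimpleGraph.irrefl]
    · rw [adj_comm, (H.comap g).adj_comm]
      exact h j i hij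
  have isoG : G.comap f ≃g G := Iso.comap (Equiv.ofBijective f hf) G
  have isoH : H.comap g ≃g H := Iso.comap (Equiv.ofBijective g hg) H
  exact ⟨isoG.symm.trans (hcomap ▸ isoH)⟩

lemma bijective_vecCons {n : ℕ} {v : V} {a : Fin n → V} (hv : ∀ i, v ≠ a i)
    (ha : Function.Injective a) (hcover : ∀ u, u = v ∨ ∃ i, u = a i) :
    Function.Bijective (Matrix.vecCons v a) := by
  refine ⟨Fin.cons_injective_iff.2 ⟨?_, ha⟩, fun u ↦ ?_⟩
  · rintro ⟨i, hi⟩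
    exact hv i hi.symm
  · rcases hcover u with rfl | ⟨i, rfl⟩
    exacts [⟨0, rfl⟩, ⟨i.succ, rfl⟩]

/-! ### Edge bijections preserving stars -/

/-- The map `φ` between edge sets carries each star (the set of all edges at a vertex) into a
star. -/
def MapsStars (φ : G.edgeSet → H.edgeSet) : Prop :=
  ∀ v, ∃ w, ∀ e, v ∈ e.1 → w ∈ (φ e).1

/-- The vertices `v` and `w` have the same edges, up to the identification `φ` of the edges of
the two graphs. -/
def Corresponds (φ : G.edgeSet ≃ H.edgeSet) (v : V) (w : W) : Prop :=
  ∀ e, v ∈ e.1 ↔ w ∈ (φ e).1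

variable {φ : G.edgeSet ≃ H.edgeSet} {u v : V} {u' w : W} {e f : G.edgeSet}

lemma Corresponds.symm (h : Corresponds φ v w) : Corresponds φ.symm w v := fun e ↦ by
  rw [h, φ.apply_symm_apply]

lemma Corresponds.left_unique [Nontrivial G.edgeSet] (hG : G.Preconnected)
    (hu : Corresponds φ u w) (hv : Corresponds φ v w) : u = v :=
  eq_of_forall_edge_mem_iff hG fun e ↦ (hu e).trans (hv e).symm

lemma exists_corresponds_of_ne (hφ : MapsStars φ) (hφ' : MapsStars φ.symm) (hef : e ≠ f)
    (hve : v ∈ e.1) (hvf : v ∈ f.1) : ∃ w, Corresponds φ v w := by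
  obtain ⟨w, hw⟩ := hφ v
  obtain ⟨v', hv'⟩ := hφ' w
  have mem_v' (g : G.edgeSet) (hg : w ∈ (φ g).1) : v' ∈ g.1 := by
    simpa only [φ.symm_apply_apply] using hv' (φ g) hg
  have hvv' : v = v' :=
    eq_of_mem_of_ne hef hve hvf (mem_v' e (hw e hve)) (mem_v' f (hw f hvf))
  exact ⟨w, fun g ↦ ⟨hw g, fun hg ↦ hvv' ▸ mem_v' g hg⟩⟩

-- The other end `w` of `φ e` must serve the other end `v` of `e`, even if `v` has degree one and
-- `MapsStars` does not single out a vertex for it.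
lemma mem_map_of_corresponds_other (hφ : MapsStars φ) (hφ' : MapsStars φ.symm)
    (huv : u ≠ v) (hue : u ∈ e.1) (hve : v ∈ e.1) (huw : u' ≠ w) (hu'e : u' ∈ (φ e).1)
    (hwe : w ∈ (φ e).1) (hu : Corresponds φ u u') (hvf : v ∈ f.1) : w ∈ (φ f).1 := by
  by_cases hef : e = f
  · exact hef ▸ hwe
  obtain ⟨w', hw'⟩ := exists_corresponds_of_ne hφ hφ' hef hve hvf
  have hw'_ne : w' ≠ u' := by
    rintro rfl
    exact huv (eq_of_mem_of_ne hef hue ((hu f).2 ((hw' f).1 hvf)) hve hvf)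
  have he : (φ e).1 = s(u', w) := (Sym2.mem_and_mem_iff huw).1 ⟨hu'e, hwe⟩
  have hw'_eq : w' = w := by
    have hw'e := (hw' e).1 hve
    rw [he, Sym2.mem_iff] at hw'e
    exact hw'e.resolve_left hw'_ne
  exact hw'_eq ▸ (hw' f).1 hvf

lemma exists_corresponds [Nontrivial G.edgeSet] (hG : G.Preconnected) (hφ : MapsStars φ)
    (hφ' : MapsStars φ.symm) (v : V) : ∃ w, Corresponds φ v w := by
  have : Nontrivial V := by
    obtain ⟨⟨⟨p, q⟩, hpq⟩⟩ := (inferInstance : Nonempty G.edgeSet)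
    exact ⟨p, q, G.ne_of_adj hpq⟩
  obtain ⟨e, hve⟩ := exists_edge_mem hG v
  obtain ⟨f, hef⟩ := exists_lineGraph_adj hG e
  obtain ⟨hne, u, hue, huf⟩ := lineGraph_adj_iff_exists.1 hef
  obtain ⟨u', hu⟩ := exists_corresponds_of_ne hφ hφ' hne hue huf
  by_cases huv : u = v
  · exact ⟨u', huv ▸ hu⟩
  have hu'e := (hu e).1 hue
  obtain ⟨w, huw, he⟩ := exists_eq_mk_of_mem hu'e
  have hwe : w ∈ (φ e).1 := he ▸ Sym2.mem_mk_right u' w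
  refine ⟨w, fun g ↦ ⟨mem_map_of_corresponds_other hφ hφ' huv hue hve huw hu'e hwe hu,
    fun hwg ↦ ?_⟩⟩
  have := mem_map_of_corresponds_other (φ := φ.symm) (e := φ e) hφ' hφ huw hu'e hwe huv
    (by simpa using hue) (by simpa using hve) hu.symm hwg
  simpa using this

lemma bijective_pair_of_subsingleton_edgeSet [Subsingleton G.edgeSet] (hG : G.Preconnected)
    (huv : G.Adj u v) : Function.Bijective ![u, v] := by
  have : Nontrivial V := ⟨u, v, huv.ne⟩
  refine bijective_vecCons (fun _ ↦ by simpa using huv.ne)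
    (Function.injective_of_subsingleton _) fun x ↦ ?_
  obtain ⟨e, hxe⟩ := exists_edge_mem hG x
  rw [Subsingleton.elim e ⟨s(u, v), huv⟩, Sym2.mem_iff] at hxe
  simpa using hxe

lemma subsingleton_of_isEmpty_edgeSet [IsEmpty G.edgeSet] (hG : G.Preconnected) :
    Subsingleton V := by
  have hbot : G = ⊥ := edgeSet_eq_empty.1 (Set.isEmpty_coe_sort.1 inferInstance)
  exact preconnected_bot_iff_subsingleton.1 (hbot ▸ hG)

lemma nonempty_iso_of_subsingleton_edgeSet [Subsingleton G.edgeSet] (hG : G.Connected)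
    (hH : H.Connected) (φ : G.edgeSet ≃ H.edgeSet) : Nonempty (G ≃g H) := by
  have : Subsingleton H.edgeSet := φ.symm.subsingleton
  rcases isEmpty_or_nonempty G.edgeSet with hempty | ⟨⟨⟨u, v⟩, huv⟩⟩
  · have : IsEmpty H.edgeSet := φ.symm.isEmpty
    have := subsingleton_of_isEmpty_edgeSet hG.preconnected
    have := subsingleton_of_isEmpty_edgeSet hH.preconnected
    obtain ⟨v⟩ := hG.nonempty
    obtain ⟨w⟩ := hH.nonempty
    exact nonempty_iso_of_bijective (α := Fin 1) (f := fun _ ↦ v) (g := fun _ ↦ w)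
      ⟨Function.injective_of_subsingleton _, fun x ↦ ⟨0, Subsingleton.elim _ _⟩⟩
      ⟨Function.injective_of_subsingleton _, fun x ↦ ⟨0, Subsingleton.elim _ _⟩⟩
      (fun i j hij ↦ absurd hij (by simp))
  · obtain ⟨⟨u', w⟩, huw⟩ := φ ⟨s(u, v), huv⟩
    refine nonempty_iso_of_bijective
      (bijective_pair_of_subsingleton_edgeSet hG.preconnected huv)
      (bijective_pair_of_subsingleton_edgeSet hH.preconnected huw) ?_
    simpa [Fin.forall_fin_two] using iff_of_true huv huw

theorem nonempty_iso_of_mapsStars (hG : G.Connected) (hH : H.Connected)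
    (hφ : MapsStars φ) (hφ' : MapsStars φ.symm) : Nonempty (G ≃g H) := by
  rcases subsingleton_or_nontrivial G.edgeSet with _ | _
  · exact nonempty_iso_of_subsingleton_edgeSet hG hH φ
  have : Nontrivial H.edgeSet := φ.symm.nontrivial
  choose σ hσ using exists_corresponds hG.preconnected hφ hφ'
  choose τ hτ using exists_corresponds hH.preconnected hφ' hφ
  have hστ : Function.LeftInverse τ σ := fun v ↦
    (hτ (σ v)).symm.left_unique hG.preconnected (hσ v)
  have hτσ : Function.RightInverse τ σ := fun w ↦
    (hσ (τ w)).symm.left_unique hH.preconnected (hτ w)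
  refine ⟨⟨⟨σ, τ, hστ, hτσ⟩, fun {u v} ↦ ?_⟩⟩
  have edge_iff : (∃ e : G.edgeSet, u ∈ e.1 ∧ v ∈ e.1) ↔
      ∃ e : H.edgeSet, σ u ∈ e.1 ∧ σ v ∈ e.1 :=
    φ.exists_congr fun e ↦ and_congr (hσ u e) (hσ v e)
  simpa only [adj_iff_exists_edge, Equiv.coe_fn_mk, hστ.injective.ne_iff, Subtype.exists,
    exists_prop] using and_congr_right fun _ ↦ edge_iff.symm

/-! ### A claw mapped to a triangle -/

section Claw

variable {φ : G.lineGraph ≃g H.lineGraph} {v : V} {a : Fin 3 → V} {x : Fin 3 → W}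
  {w : W} {e f : G.edgeSet} {i j k : Fin 3}

-- Also holds for `e = f`, where the loopless line graphs carry no information.
lemma exists_mem_mem_iff (φ : G.lineGraph ≃g H.lineGraph) (e f : G.edgeSet) :
    (∃ v, v ∈ e.1 ∧ v ∈ f.1) ↔ ∃ w, w ∈ (φ e).1 ∧ w ∈ (φ f).1 := by
  by_cases hef : e = f
  · subst hef
    exact iff_of_true ⟨_, Sym2.out_fst_mem _, Sym2.out_fst_mem _⟩
      ⟨_, Sym2.out_fst_mem _, Sym2.out_fst_mem _⟩
  · simpa only [lineGraph_adj_iff_exists, ne_eq, φ.injective.eq_iff, hef, not_false_eq_true,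
      true_and] using (φ.map_adj_iff (v := e) (w := f)).symm

/-- The claw with centre `v` and leaves `a i` is mapped by `φ` to the triangle with corners `x i`.
The indices are chosen such that the edge from `v` to `a i` is mapped to the side of the triangle
opposite to `x i`. -/
structure ClawToTriangle (φ : G.lineGraph ≃g H.lineGraph) (v : V) (a : Fin 3 → V)
    (x : Fin 3 → W) : Prop where
  adj : ∀ i, G.Adj v (a i)
  corner_injective : Function.Injective x
  mem_map_iff : ∀ i w, w ∈ (φ ⟨s(v, a i), adj i⟩).1 ↔ ∃ j ≠ i, w = x j

lemma exists_clawToTriangle_of_edges {s : Fin 3 → G.edgeSet} (hs : ∀ i, v ∈ (s i).1)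
    (hx : Function.Injective x) (hsx : ∀ i w, w ∈ (φ (s i)).1 ↔ ∃ j ≠ i, w = x j) :
    ∃ a, ClawToTriangle φ v a x := by
  choose a ha using fun i ↦ Sym2.mem_iff_exists.1 (hs i)
  have hadj (i : Fin 3) : G.Adj v (a i) := by
    rw [← mem_edgeSet, ← ha i]
    exact (s i).2
  refine ⟨a, hadj, hx, fun i w ↦ ?_⟩
  have hspoke : s i = ⟨s(v, a i), hadj i⟩ := Subtype.ext (ha i)
  exact hspoke ▸ hsx i w

lemma exists_clawToTriangle [Nonempty W] (hφ : ¬ MapsStars φ) :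
    ∃ v a x, ClawToTriangle φ v a x := by
  unfold MapsStars at hφ
  push Not at hφ
  obtain ⟨v, hv⟩ := hφ
  obtain ⟨e₀, hve₀, -⟩ := hv (Classical.arbitrary W)
  obtain ⟨x₁, x₂, he₀⟩ : ∃ x₁ x₂, (φ e₀).1 = s(x₁, x₂) := ⟨_, _, (Quot.out_eq _).symm⟩
  obtain ⟨e₁, hve₁, hx₁e₁⟩ := hv x₁
  obtain ⟨e₂, hve₂, hx₂e₂⟩ := hv x₂
  have hx₂e₁ : x₂ ∈ (φ e₁).1 := by
    have hmeet := (exists_mem_mem_iff φ e₀ e₁).1 ⟨v, hve₀, hve₁⟩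
    grind
  have hx₁e₂ : x₁ ∈ (φ e₂).1 := by
    have hmeet := (exists_mem_mem_iff φ e₀ e₂).1 ⟨v, hve₀, hve₂⟩
    grind
  obtain ⟨x₀, hx₀e₁, hx₀e₂⟩ := (exists_mem_mem_iff φ e₁ e₂).1 ⟨v, hve₁, hve₂⟩
  have hx₀₁ : x₀ ≠ x₁ := ne_of_mem_of_not_mem hx₀e₁ hx₁e₁
  have hx₀₂ : x₀ ≠ x₂ := ne_of_mem_of_not_mem hx₀e₂ hx₂e₂
  have hx₁₂ : x₁ ≠ x₂ := ne_of_mem_of_not_mem hx₁e₂ hx₂e₂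
  have he₁ : (φ e₁).1 = s(x₀, x₂) := (Sym2.mem_and_mem_iff hx₀₂).1 ⟨hx₀e₁, hx₂e₁⟩
  have he₂ : (φ e₂).1 = s(x₀, x₁) := (Sym2.mem_and_mem_iff hx₀₁).1 ⟨hx₀e₂, hx₁e₂⟩
  have hinj : Function.Injective ![x₀, x₁, x₂] := by
    intro i j
    fin_cases i <;> fin_cases j <;> simp [hx₀₁, hx₀₂, hx₁₂, hx₀₁.symm, hx₀₂.symm, hx₁₂.symm]
  obtain ⟨a, ha⟩ := exists_clawToTriangle_of_edges (φ := φ) (v := v) (s := ![e₀, e₁, e₂])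
    (by simp [Fin.forall_fin_succ, hve₀, hve₁, hve₂]) hinj (by
      simp [Fin.forall_fin_succ, Fin.exists_fin_succ, he₀, he₁, he₂])
  exact ⟨v, a, _, ha⟩

namespace ClawToTriangle

/-- The edge of the claw from its centre to the leaf `a i`. -/
def spoke (h : ClawToTriangle φ v a x) (i : Fin 3) : G.edgeSet := ⟨s(v, a i), h.adj i⟩

lemma mem_spoke (h : ClawToTriangle φ v a x) {u : V} : u ∈ (h.spoke i).1 ↔ u = v ∨ u = a i :=
  Sym2.mem_iff

lemma mem_map_spoke (h : ClawToTriangle φ v a x) : w ∈ (φ (h.spoke i)).1 ↔ ∃ j ≠ i, w = x j :=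
  h.mem_map_iff i w

lemma corner_mem_map_spoke (h : ClawToTriangle φ v a x) : x j ∈ (φ (h.spoke i)).1 ↔ j ≠ i := by
  simp [h.mem_map_spoke, h.corner_injective.eq_iff]

lemma leaf_injective (h : ClawToTriangle φ v a x) : Function.Injective a := by
  intro i j hij
  have hspoke : h.spoke i = h.spoke j := Subtype.ext (congrArg (s(v, ·)) hij)
  by_contra hne
  exact h.corner_mem_map_spoke.1 (hspoke ▸ h.corner_mem_map_spoke.2 hne) rfl

lemma comp_perm (h : ClawToTriangle φ v a x) (π : Equiv.Perm (Fin 3)) :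
    ClawToTriangle φ v (a ∘ π) (x ∘ π) where
  adj i := h.adj (π i)
  corner_injective := h.corner_injective.comp π.injective
  mem_map_iff i w := by
    simpa only [Function.comp_apply, π.injective.ne_iff] using
      (h.mem_map_iff (π i) w).trans π.exists_congr_right.symm

lemma exists_eq_spoke_of_corner_mem (h : ClawToTriangle φ v a x) (hjk : j ≠ k)
    (hj : x j ∈ (φ e).1) (hk : x k ∈ (φ e).1) : ∃ i, e = h.spoke i := by
  obtain ⟨i, hij, hik⟩ := Fin.exists_ne_and_ne_of_two_lt j k (by decide)
  by_contra! hspoke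
  exact h.corner_injective.ne hjk (eq_of_mem_of_ne (φ.injective.ne (hspoke i)) hj
    (h.corner_mem_map_spoke.2 hij.symm) hk (h.corner_mem_map_spoke.2 hik.symm))

lemma center_or_leaf_mem_iff (h : ClawToTriangle φ v a x) :
    v ∈ e.1 ∨ a i ∈ e.1 ↔ ∃ j ≠ i, x j ∈ (φ e).1 := by
  simpa [h.mem_spoke, h.mem_map_spoke, or_and_right, exists_or] using
    exists_mem_mem_iff φ (h.spoke i) e

lemma exists_eq_spoke (h : ClawToTriangle φ v a x) (hve : v ∈ e.1) : ∃ i, e = h.spoke i := by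
  obtain ⟨j, -, hj⟩ := h.center_or_leaf_mem_iff (i := 0).1 (.inl hve)
  obtain ⟨k, hkj, hk⟩ := h.center_or_leaf_mem_iff (i := j).1 (.inl hve)
  exact h.exists_eq_spoke_of_corner_mem hkj hk hj

lemma corner_unique (h : ClawToTriangle φ v a x) (hve : v ∉ e.1) (hj : x j ∈ (φ e).1)
    (hk : x k ∈ (φ e).1) : j = k := by
  by_contra hjk
  obtain ⟨i, rfl⟩ := h.exists_eq_spoke_of_corner_mem hjk hj hk
  exact hve (h.mem_spoke.2 (.inl rfl))

lemma leaf_mem_iff_ne (h : ClawToTriangle φ v a x) (hve : v ∉ e.1) (hj : x j ∈ (φ e).1) :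
    a i ∈ e.1 ↔ i ≠ j := by
  rw [← or_iff_right (b := a i ∈ e.1) hve, h.center_or_leaf_mem_iff]
  constructor
  · rintro ⟨k, hki, hk⟩
    exact h.corner_unique hve hk hj ▸ hki.symm
  · exact fun hij ↦ ⟨j, hij.symm, hj⟩

lemma eq_center_or_leaf (h : ClawToTriangle φ v a x) (hG : G.Preconnected) (u : V) :
    u = v ∨ ∃ i, u = a i := by
  refine forall_of_adj_closed hG (P := fun u ↦ u = v ∨ ∃ i, u = a i) (.inl rfl) ?_ u
  intro p q hpq hp
  let e : G.edgeSet := ⟨s(p, q), hpq⟩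
  have hqe : q ∈ e.1 := Sym2.mem_mk_right p q
  by_cases hve : v ∈ e.1
  · obtain ⟨i, hi⟩ := h.exists_eq_spoke hve
    rw [hi, h.mem_spoke] at hqe
    exact hqe.imp_right fun hq ↦ ⟨i, hq⟩
  · have hpv : p ≠ v := by
      rintro rfl
      exact hve (Sym2.mem_mk_left p q)
    obtain ⟨i, rfl⟩ := hp.resolve_left hpv
    have hie : a i ∈ e.1 := Sym2.mem_mk_left (a i) q
    obtain ⟨j, -, hj⟩ := h.center_or_leaf_mem_iff.1 (.inr hie)
    obtain ⟨k, hki, hkj⟩ := Fin.exists_ne_and_ne_of_two_lt i j (by decide)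
    have hke : a k ∈ s(a i, q) := (h.leaf_mem_iff_ne hve hj).2 hkj
    exact .inr ⟨k, ((Sym2.mem_iff.1 hke).resolve_left (h.leaf_injective.ne hki)).symm⟩

lemma exists_corner_mem (h : ClawToTriangle φ v a x) (hG : G.Preconnected) (hve : v ∉ e.1) :
    ∃ j, x j ∈ (φ e).1 := by
  have hmem := Sym2.out_fst_mem e.1
  obtain ⟨i, hi⟩ : ∃ i, e.1.out.1 = a i :=
    (h.eq_center_or_leaf hG _).resolve_left fun hv ↦ hve (hv ▸ hmem)
  obtain ⟨j, -, hj⟩ := h.center_or_leaf_mem_iff.1 (.inr (hi ▸ hmem))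
  exact ⟨j, hj⟩

lemma corner_adj_iff (h : ClawToTriangle φ v a x) : H.Adj (x i) (x j) ↔ i ≠ j := by
  refine ⟨fun hadj ↦ ne_of_apply_ne x hadj.ne, fun hij ↦ ?_⟩
  obtain ⟨k, hki, hkj⟩ := Fin.exists_ne_and_ne_of_two_lt i j (by decide)
  exact adj_iff_exists_edge.2 ⟨h.corner_injective.ne hij, _, (φ (h.spoke k)).2,
    h.corner_mem_map_spoke.2 hki.symm, h.corner_mem_map_spoke.2 hkj.symm⟩

lemma center_notMem_mk_leaf (h : ClawToTriangle φ v a x) : v ∉ s(a i, a j) := by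
  rw [Sym2.mem_iff]
  exact not_or.2 ⟨(h.adj i).ne, (h.adj j).ne⟩

lemma bijective_center_leaf (h : ClawToTriangle φ v a x) (hG : G.Preconnected) :
    Function.Bijective (Matrix.vecCons v a) :=
  bijective_vecCons (fun i ↦ (h.adj i).ne) h.leaf_injective (h.eq_center_or_leaf hG)

lemma nonempty_iso_completeBipartiteGraph (h : ClawToTriangle φ v a x) (hG : G.Preconnected)
    (hv : ∀ e : G.edgeSet, v ∈ e.1) :
    Nonempty (G ≃g completeBipartiteGraph (Fin 1) (Fin 3)) := by
  have not_adj (i j : Fin 3) : ¬ G.Adj (a i) (a j) := fun hij ↦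
    h.center_notMem_mk_leaf (hv ⟨_, hij⟩)
  refine nonempty_iso_of_bijective (g := ![.inl 0, .inr 0, .inr 1, .inr 2])
    (h.bijective_center_leaf hG) (by decide) ?_
  simp [Fin.forall_fin_succ, h.adj, not_adj]

lemma nonempty_iso_top (h : ClawToTriangle φ v a x) (hH : H.Preconnected)
    (hv : ∀ e : G.edgeSet, v ∈ e.1) : Nonempty (H ≃g (⊤ : SimpleGraph (Fin 3))) := by
  have : Nontrivial W := h.corner_injective.nontrivial
  have hsurj : Function.Surjective x := fun u ↦ by
    obtain ⟨ε, huε⟩ := exists_edge_mem hH u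
    obtain ⟨e, rfl⟩ := φ.surjective ε
    obtain ⟨i, rfl⟩ := h.exists_eq_spoke (hv e)
    obtain ⟨j, -, hj⟩ := h.mem_map_spoke.1 huε
    exact ⟨j, hj.symm⟩
  exact nonempty_iso_of_bijective ⟨h.corner_injective, hsurj⟩ Function.bijective_id
    fun i j _ ↦ h.corner_adj_iff

lemma eq_of_corner_mem (h : ClawToTriangle φ v a x) (hve : v ∉ e.1) (hvf : v ∉ f.1)
    (hje : x j ∈ (φ e).1) (hjf : x j ∈ (φ f).1) : e = f := by
  obtain ⟨i, hij, -⟩ := Fin.exists_ne_and_ne_of_two_lt j j (by decide)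
  obtain ⟨k, hkj, hki⟩ := Fin.exists_ne_and_ne_of_two_lt j i (by decide)
  by_contra hef
  exact h.leaf_injective.ne hki (eq_of_mem_of_ne hef
    ((h.leaf_mem_iff_ne hve hje).2 hkj) ((h.leaf_mem_iff_ne hvf hjf).2 hkj)
    ((h.leaf_mem_iff_ne hve hje).2 hij) ((h.leaf_mem_iff_ne hvf hjf).2 hij))

lemma exists_apex (h : ClawToTriangle φ v a x) (hG : G.Preconnected) (hve : v ∉ e.1) :
    ∃ w, (∀ i, w ≠ x i) ∧ ∀ f : G.edgeSet, v ∉ f.1 → w ∈ (φ f).1 := by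
  obtain ⟨j, hj⟩ := h.exists_corner_mem hG hve
  obtain ⟨w, hjw, he⟩ := exists_eq_mk_of_mem hj
  have hwe : w ∈ (φ e).1 := he ▸ Sym2.mem_mk_right (x j) w
  refine ⟨w, ?_, fun f hvf ↦ ?_⟩
  · rintro i rfl
    exact hjw (congrArg x (h.corner_unique hve hj hwe))
  obtain ⟨k, hk⟩ := h.exists_corner_mem hG hvf
  by_cases hjk : j = k
  · subst hjk
    exact h.eq_of_corner_mem hve hvf hj hk ▸ hwe
  obtain ⟨i, hij, hik⟩ := Fin.exists_ne_and_ne_of_two_lt j k (by decide)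
  obtain ⟨u, hue, huf⟩ := (exists_mem_mem_iff φ e f).1
    ⟨a i, (h.leaf_mem_iff_ne hve hj).2 hij, (h.leaf_mem_iff_ne hvf hk).2 hik⟩
  rw [he, Sym2.mem_iff] at hue
  rcases hue with rfl | rfl
  · exact absurd (h.corner_unique hvf huf hk) hjk
  · exact huf

lemma eq_apex_or_corner (h : ClawToTriangle φ v a x) (hG : G.Preconnected)
    (hH : H.Preconnected) (hwx : ∀ i, w ≠ x i)
    (hw : ∀ f : G.edgeSet, v ∉ f.1 → w ∈ (φ f).1) (u : W) : u = w ∨ ∃ i, u = x i := by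
  have : Nontrivial W := h.corner_injective.nontrivial
  obtain ⟨ε, huε⟩ := exists_edge_mem hH u
  obtain ⟨e, rfl⟩ := φ.surjective ε
  by_cases hve : v ∈ e.1
  · obtain ⟨i, rfl⟩ := h.exists_eq_spoke hve
    obtain ⟨j, -, hj⟩ := h.mem_map_spoke.1 huε
    exact .inr ⟨j, hj⟩
  · obtain ⟨j, hj⟩ := h.exists_corner_mem hG hve
    rw [(Sym2.mem_and_mem_iff (hwx j)).1 ⟨hw e hve, hj⟩, Sym2.mem_iff] at huε
    exact huε.imp_right fun hu ↦ ⟨j, hu⟩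

lemma leaf_adj_iff (h : ClawToTriangle φ v a x) (hG : G.Preconnected) (hwx : ∀ i, w ≠ x i)
    (hw : ∀ f : G.edgeSet, v ∉ f.1 → w ∈ (φ f).1) (hij : i ≠ j) (hik : i ≠ k) (hjk : j ≠ k) :
    G.Adj (a i) (a j) ↔ H.Adj w (x k) := by
  constructor
  · intro hadj
    let e : G.edgeSet := ⟨s(a i, a j), hadj⟩
    have hve : v ∉ e.1 := h.center_notMem_mk_leaf
    obtain ⟨l, hl⟩ := h.exists_corner_mem hG hve
    have hil : i ≠ l := (h.leaf_mem_iff_ne hve hl).1 (Sym2.mem_mk_left _ _)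
    have hjl : j ≠ l := (h.leaf_mem_iff_ne hve hl).1 (Sym2.mem_mk_right _ _)
    obtain rfl : k = l := by lia
    exact adj_iff_exists_edge.2 ⟨hwx k, _, (φ e).2, hw e hve, hl⟩
  · intro hadj
    obtain ⟨e, he⟩ := φ.surjective ⟨s(w, x k), hadj⟩
    have hwe : w ∈ (φ e).1 := he ▸ Sym2.mem_mk_left w (x k)
    have hke : x k ∈ (φ e).1 := he ▸ Sym2.mem_mk_right w (x k)
    have hve : v ∉ e.1 := fun hv ↦ by
      obtain ⟨l, rfl⟩ := h.exists_eq_spoke hv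
      obtain ⟨m, -, hm⟩ := h.mem_map_spoke.1 hwe
      exact hwx m hm
    exact adj_iff_exists_edge.2 ⟨h.leaf_injective.ne hij, _, e.2,
      (h.leaf_mem_iff_ne hve hke).2 hik, (h.leaf_mem_iff_ne hve hke).2 hjk⟩

lemma nonempty_iso_of_corner_zero_mem (h : ClawToTriangle φ v a x) (hG : G.Preconnected)
    (hH : H.Preconnected) (hve : v ∉ e.1) (he : x 0 ∈ (φ e).1) : Nonempty (G ≃g H) := by
  obtain ⟨w, hwx, hw⟩ := h.exists_apex hG hve
  have hg : Function.Bijective (Matrix.vecCons w x) :=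
    bijective_vecCons hwx h.corner_injective (h.eq_apex_or_corner hG hH hwx hw)
  have hw₀ : H.Adj (x 0) w := adj_iff_exists_edge.2 ⟨(hwx 0).symm, _, (φ e).2, he, hw e hve⟩
  have ha₁₂ : G.Adj (a 1) (a 2) :=
    (h.leaf_adj_iff hG hwx hw (by decide) (by decide) (by decide)).2 hw₀.symm
  have ha₀₁ : G.Adj (a 0) (a 1) ↔ H.Adj w (x 2) :=
    h.leaf_adj_iff hG hwx hw (by decide) (by decide) (by decide)
  have ha₀₂ : G.Adj (a 0) (a 2) ↔ H.Adj w (x 1) :=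
    h.leaf_adj_iff hG hwx hw (by decide) (by decide) (by decide)
  -- The isomorphism sends `v, a 0, a 1, a 2` to `x 0, w, x 2, x 1`.
  refine nonempty_iso_of_bijective (g := Matrix.vecCons w x ∘ ![1, 0, 3, 2])
    (h.bijective_center_leaf hG) (hg.comp (by decide)) ?_
  simp [Fin.forall_fin_succ, h.adj, h.corner_adj_iff, hw₀, ha₁₂, ha₀₁, ha₀₂]

lemma nonempty_iso_of_center_notMem (h : ClawToTriangle φ v a x) (hG : G.Preconnected)
    (hH : H.Preconnected) (hve : v ∉ e.1) : Nonempty (G ≃g H) := by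
  obtain ⟨j, hj⟩ := h.exists_corner_mem hG hve
  refine (h.comp_perm (Equiv.swap 0 j)).nonempty_iso_of_corner_zero_mem hG hH hve ?_
  simpa using hj

end ClawToTriangle

theorem nonempty_iso_or_of_not_mapsStars (hG : G.Connected) (hH : H.Connected)
    (hφ : ¬ MapsStars φ) :
    Nonempty (G ≃g H) ∨ Nonempty (G ≃g completeBipartiteGraph (Fin 1) (Fin 3)) ∧
      Nonempty (H ≃g (⊤ : SimpleGraph (Fin 3))) := by
  have := hH.nonempty
  obtain ⟨v, a, x, h⟩ := exists_clawToTriangle hφ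
  by_cases hv : ∀ e : G.edgeSet, v ∈ e.1
  · exact .inr ⟨h.nonempty_iso_completeBipartiteGraph hG.preconnected hv,
      h.nonempty_iso_top hH.preconnected hv⟩
  · obtain ⟨e, hve⟩ := not_forall.1 hv
    exact .inl (h.nonempty_iso_of_center_notMem hG.preconnected hH.preconnected hve)

end Claw

end Whitney

open Whitney in
theorem stmt_6_general {V W : Type*} (G : SimpleGraph V) (H : SimpleGraph W)
    (hG : G.Connected) (hH : H.Connected)
    (hline : Nonempty (G.lineGraph ≃g H.lineGraph)) :
    Nonempty (G ≃g H) ∨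
      ((Nonempty (G ≃g (⊤ : SimpleGraph (Fin 3))) ∧
          Nonempty (H ≃g completeBipartiteGraph (Fin 1) (Fin 3))) ∨
        (Nonempty (G ≃g completeBipartiteGraph (Fin 1) (Fin 3)) ∧
          Nonempty (H ≃g (⊤ : SimpleGraph (Fin 3))))) := by
  obtain ⟨φ⟩ := hline
  by_cases hφ : MapsStars φ
  · by_cases hφ' : MapsStars φ.symm
    · exact .inl (nonempty_iso_of_mapsStars (φ := φ.toEquiv) hG hH hφ hφ')
    · rcases nonempty_iso_or_of_not_mapsStars hH hG hφ' with ⟨⟨ψ⟩⟩ | ⟨hHclaw, hGtriangle⟩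
      · exact .inl ⟨ψ.symm⟩
      · exact .inr (.inl ⟨hGtriangle, hHclaw⟩)
  · exact (nonempty_iso_or_of_not_mapsStars hG hH hφ).imp_right .inr

/-- **Whitney's theorem.** If two connected finite simple graphs have isomorphic line graphs,
then the graphs themselves are isomorphic, except when one of them is the triangle `K₃` and
the other is the star `K₁,₃`. -/
theorem stmt_6 {V W : Type} [Fintype V] [Fintype W]
    (G : SimpleGraph V) (H : SimpleGraph W)
    (hG : G.Connected) (hH : H.Connected)
    (hline : Nonempty (G.lineGraph ≃g H.lineGraph)) :
    Nonempty (G ≃g H) ∨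
      ((Nonempty (G ≃g (⊤ : SimpleGraph (Fin 3))) ∧
          Nonempty (H ≃g completeBipartiteGraph (Fin 1) (Fin 3))) ∨
        (Nonempty (G ≃g completeBipartiteGraph (Fin 1) (Fin 3)) ∧
          Nonempty (H ≃g (⊤ : SimpleGraph (Fin 3))))) :=
  stmt_6_general G H hG hH hline
end

section
/- Graph autoencoder-style link representations are not most expressive structural link representations: in the path graph P₄ on vertices {0, 1, 2, 3} with edges {0,1}, {1,2}, {2,3}, for every type X, every function h from the vertices of P₄ to X satisfying h(u) = h(v) whenever the singletons {u} and {v} are set-isomorphic in P₄, every type Y, and every aggregation function AGG : X × X → Y, one has AGG(h(0), h(1)) = AGG(h(3), h(1)), even though the vertex pairs {0, 1} and {3, 1} are not set-isomorphic in P₄. Hence the pair representation (u, v) ↦ AGG(h(u), h(v)) assigns equal values to two vertex pairs that are not set-isomorphic, so it is not a most expressive structural link representation. -/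
open SimpleGraph

/-!
The reflection of a path exchanges its two ends, so an invariant vertex representation takes the
same value at both, and aggregation cannot undo this. The pairs formed by either end with the
second vertex are nevertheless not set-isomorphic: one is an edge, the other is not.
-/

section SetIsomorphic

variable {V : Type*} {G : SimpleGraph V}

/-- Set-isomorphism `S ≃_G T` of vertex subsets: some automorphism of `G` maps `S` onto `T`. -/
def SetIsomorphic (G : SimpleGraph V) (S T : Set V) : Prop :=
  ∃ π : G ≃g G, π '' S = T

theorem setIsomorphic_singleton_apply (π : G ≃g G) (v : V) : SetIsomorphic G {v} {π v} :=
  ⟨π, Set.image_singleton⟩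

theorem SetIsomorphic.adj_iff_adj {a b c d : V} (hpairs : SetIsomorphic G {a, b} {c, d}) :
    G.Adj a b ↔ G.Adj c d := by
  obtain ⟨π, hπ⟩ := hpairs
  rw [Set.image_pair, Set.pair_eq_pair_iff] at hπ
  rw [← π.map_adj_iff]
  rcases hπ with ⟨ha, hb⟩ | ⟨ha, hb⟩
  · rw [ha, hb]
  · rw [ha, hb, G.adj_comm]

end SetIsomorphic

/-- The reflection `i ↦ n - 1 - i` of the path on `n` vertices, as a graph automorphism. -/
def pathGraphRevIso (n : ℕ) : pathGraph n ≃g pathGraph n where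
  toEquiv := Fin.revPerm
  map_rel_iff' {i j} := by
    simp only [pathGraph_adj, Fin.revPerm_apply, Fin.val_rev]
    omega

theorem setIsomorphic_pathGraph_singleton_rev {n : ℕ} (i : Fin n) :
    SetIsomorphic (pathGraph n) {i} {i.rev} :=
  setIsomorphic_singleton_apply (pathGraphRevIso n) i

theorem not_setIsomorphic_pathGraph_zero_one_last_one (n : ℕ) :
    ¬ SetIsomorphic (pathGraph (n + 4)) {0, 1} {Fin.last (n + 3), 1} := by
  intro hpairs
  have h_edge : (pathGraph (n + 4)).Adj 0 1 := by simp [pathGraph_adj]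
  have h_nonedge : ¬ (pathGraph (n + 4)).Adj (Fin.last (n + 3)) 1 := by simp [pathGraph_adj]
  exact h_nonedge (hpairs.adj_iff_adj.mp h_edge)

theorem stmt_11_general (n : ℕ) :
    (∀ (X : Type*) (h : Fin (n + 4) → X),
        (∀ u v, SetIsomorphic (pathGraph (n + 4)) {u} {v} → h u = h v) →
        ∀ (Y : Type*) (AGG : X × X → Y), AGG (h 0, h 1) = AGG (h (Fin.last (n + 3)), h 1)) ∧
    ¬ SetIsomorphic (pathGraph (n + 4)) {0, 1} {Fin.last (n + 3), 1} := by
  refine ⟨fun X h h_inv Y AGG ↦ ?_, not_setIsomorphic_pathGraph_zero_one_last_one n⟩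
  have h_ends : h 0 = h (Fin.last (n + 3)) := by
    simpa only [Fin.rev_zero] using h_inv _ _ (setIsomorphic_pathGraph_singleton_rev 0)
  rw [h_ends]

/-- Graph autoencoder-style link representations are not most expressive structural link
representations: in the path graph `P₄`, for any per-vertex representation `h` that is
invariant on set-isomorphism classes of single vertices and any aggregation function `AGG`,
we get `AGG (h 0, h 1) = AGG (h 3, h 1)`, even though the vertex pairs `{0, 1}` and `{3, 1}`
are not set-isomorphic in `P₄`. -/
theorem stmt_11 :
    (∀ (X : Type*) (h : Fin 4 → X),
        (∀ u v : Fin 4,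
            (∃ π : pathGraph 4 ≃g pathGraph 4,
                ⇑π '' ({u} : Set (Fin 4)) = ({v} : Set (Fin 4))) → h u = h v) →
        ∀ (Y : Type*) (AGG : X × X → Y), AGG (h 0, h 1) = AGG (h 3, h 1)) ∧
    ¬ ∃ π : pathGraph 4 ≃g pathGraph 4,
        (⇑π '' ({0, 1} : Set (Fin 4)) = ({3, 1} : Set (Fin 4))) :=
  stmt_11_general 0
end
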